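/- For every z ∈ ℝ, (P_{n0}(z))² − ( ∏_{i=1}^{n0} a(i) )² = det(z·I − J_cs) · det(z·I − J^D_cs). -/

import Mathlib

open Polynomial

/-- The `(n0+1) × (n0+1)` centrosymmetric tridiagonal Jacobi matrix. -/
noncomputable def Jcs (n0 : ℕ) (a b : ℕ → ℝ) :
    Matrix (Fin (n0 + 1)) (Fin (n0 + 1)) ℝ :=
  Matrix.of fun i j =>
    if (j : ℕ) = (i : ℕ) then b (i : ℕ)
    else if (j : ℕ) = (i : ℕ) + 1 then a ((i : ℕ) + 1)
    else if (i : ℕ) = (j : ℕ) + 1 then a (n0 - (j : ℕ))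
    else 0

/-- The `(n0−1) × (n0−1)` Dirichlet restriction of `Jcs`, obtained by deleting the
first and last rows and columns. -/
noncomputable def JDcs (n0 : ℕ) (a b : ℕ → ℝ) :
    Matrix (Fin (n0 - 1)) (Fin (n0 - 1)) ℝ :=
  Matrix.of fun i j =>
    Jcs n0 a b ⟨(i : ℕ) + 1, by have := i.isLt; omega⟩ ⟨(j : ℕ) + 1, by have := j.isLt; omega⟩

/-!
Determinants of tridiagonal matrices are continuants. Write `T[s, t)` for the diagonal block of a
tridiagonal `T` on the indices `s ≤ j < t`. Euler's identity for continuants says that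
`det T[0, n) * det T[1, n + 1) - det T[0, n + 1) * det T[1, n)` is the product of the off-diagonal
products `T j (j + 1) * T (j + 1) j` with `j < n`. For `T = z • 1 - Jcs`, centrosymmetry makes the
two blocks of size `n` reversals of each other, so that both have determinant `P n` at `z`, and it
pairs the off-diagonal entries into a perfect square.
-/

section Continuant

variable {R : Type*} [CommRing R]

/-- The `m`-th continuant with diagonal entries `d 0, …, d (m - 1)` and off-diagonal products
`c 0, …, c (m - 2)`: the value of a tridiagonal determinant (see `det_tridiagonal`), here given by
its expansion along the last row. Blocks that start further down the diagonal are obtained by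
shifting the sequences. -/
def continuant (d c : ℕ → R) : ℕ → R
  | 0 => 1
  | 1 => d 0
  | m + 2 => d (m + 1) * continuant d c (m + 1) - c m * continuant d c m

theorem continuant_add_two (d c : ℕ → R) (m : ℕ) :
    continuant d c (m + 2) = d (m + 1) * continuant d c (m + 1) - c m * continuant d c m :=
  rfl

theorem eq_continuant_of_recurrence {d c p : ℕ → R} {N : ℕ} (h_zero : p 0 = 1)
    (h_one : p 1 = d 0) (h_rec : ∀ k, k + 2 ≤ N → p (k + 2) = d (k + 1) * p (k + 1) - c k * p k)
    {k : ℕ} (hk : k ≤ N) : p k = continuant d c k := by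
  induction k using Nat.twoStepInduction with
  | zero => exact h_zero
  | one => exact h_one
  | more k ih ih' => rw [h_rec k hk, ih (by omega), ih' (by omega), continuant_add_two]

theorem continuant_add_two_expand_first (d c : ℕ → R) (m : ℕ) :
    continuant d c (m + 2) = d 0 * continuant (fun j ↦ d (j + 1)) (fun j ↦ c (j + 1)) (m + 1) -
      c 0 * continuant (fun j ↦ d (j + 2)) (fun j ↦ c (j + 2)) m := by
  induction m using Nat.twoStepInduction with
  | zero => simp only [continuant]; ring
  | one => simp only [continuant]; ring
  | more m ih ih' =>
    rw [continuant_add_two d, ih, ih', continuant_add_two (fun j ↦ d (j + 1)) _ (m + 1),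
      continuant_add_two (fun j ↦ d (j + 2)) _ m]
    ring

theorem continuant_eq_of_reverse {d c d' c' : ℕ → R} {m : ℕ}
    (hd : ∀ i j, i + j + 1 = m → d i = d' j) (hc : ∀ i j, i + j + 2 = m → c i = c' j) :
    continuant d c m = continuant d' c' m := by
  induction m using Nat.twoStepInduction generalizing d' c' with
  | zero => rfl
  | one => exact hd 0 0 rfl
  | more m ih ih' =>
    rw [continuant_add_two, continuant_add_two_expand_first d' c', hd (m + 1) 0 rfl, hc m 0 rfl,
      ih' (fun i j h ↦ hd i (j + 1) (by omega)) (fun i j h ↦ hc i (j + 1) (by omega)),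
      ih (fun i j h ↦ hd i (j + 2) (by omega)) (fun i j h ↦ hc i (j + 2) (by omega))]

theorem continuant_mul_continuant_shift_sub (d c : ℕ → R) (m : ℕ) :
    continuant d c (m + 1) * continuant (fun j ↦ d (j + 1)) (fun j ↦ c (j + 1)) (m + 1) -
      continuant d c (m + 2) * continuant (fun j ↦ d (j + 1)) (fun j ↦ c (j + 1)) m =
      ∏ j ∈ Finset.range (m + 1), c j := by
  induction m with
  | zero => simp only [continuant, zero_add, Finset.prod_range_one]; ring
  | succ m ih =>
    rw [Finset.prod_range_succ, ← ih, continuant_add_two d c (m + 1),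
      continuant_add_two (fun j ↦ d (j + 1)) _ m]
    ring

end Continuant

section Tridiagonal

variable {R : Type*}

/-- The `m × m` tridiagonal matrix with diagonal `d`, superdiagonal `u` and subdiagonal `l`, where
`u j` and `l j` are the two entries linking the indices `j` and `j + 1`. -/
def tridiagonal [Zero R] (d u l : ℕ → R) (m : ℕ) : Matrix (Fin m) (Fin m) R :=
  Matrix.of fun i j ↦
    if (j : ℕ) = i then d i
    else if (j : ℕ) = i + 1 then u i
    else if (i : ℕ) = j + 1 then l j
    else 0

theorem submatrix_succ_tridiagonal [Zero R] (d u l : ℕ → R) (m : ℕ) :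
    (tridiagonal d u l (m + 1)).submatrix Fin.succ Fin.succ =
      tridiagonal (fun j ↦ d (j + 1)) (fun j ↦ u (j + 1)) (fun j ↦ l (j + 1)) m := by
  ext i j
  simp [tridiagonal]

theorem smul_one_sub_tridiagonal [Ring R] (z : R) (d u l : ℕ → R) (m : ℕ) :
    z • (1 : Matrix (Fin m) (Fin m) R) - tridiagonal d u l m =
      tridiagonal (fun j ↦ z - d j) (fun j ↦ -u j) (fun j ↦ -l j) m := by
  ext i j
  simp only [Matrix.sub_apply, Matrix.smul_apply, Matrix.one_apply, tridiagonal, Matrix.of_apply,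
    Fin.ext_iff, smul_eq_mul]
  split_ifs <;> first | omega | simp

variable [CommRing R]

theorem det_tridiagonal_submatrix_succAbove_one (d u l : ℕ → R) (m : ℕ) :
    ((tridiagonal d u l (m + 2)).submatrix Fin.succ (Fin.succAbove 1)).det =
      l 0 * (tridiagonal (fun j ↦ d (j + 2)) (fun j ↦ u (j + 2)) (fun j ↦ l (j + 2)) m).det := by
  have first_column_zero (i : Fin m) :
      (tridiagonal d u l (m + 2)).submatrix Fin.succ (Fin.succAbove 1) i.succ 0 = 0 := by
    simp [tridiagonal]
  have corner : (tridiagonal d u l (m + 2)).submatrix Fin.succ (Fin.succAbove 1) 0 0 = l 0 := by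
    simp [tridiagonal]
  have minor : ((tridiagonal d u l (m + 2)).submatrix Fin.succ (Fin.succAbove 1)).submatrix
      Fin.succ Fin.succ =
      ((tridiagonal d u l (m + 2)).submatrix Fin.succ Fin.succ).submatrix Fin.succ Fin.succ := by
    ext i j
    simp
  rw [Matrix.det_succ_column_zero, Fin.sum_univ_succ, Fin.succAbove_zero, minor,
    submatrix_succ_tridiagonal, submatrix_succ_tridiagonal, corner]
  simp only [first_column_zero, Fin.val_zero, pow_zero, one_mul, mul_zero, zero_mul,
    Finset.sum_const_zero, add_zero]

theorem det_tridiagonal_add_two (d u l : ℕ → R) (m : ℕ) :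
    (tridiagonal d u l (m + 2)).det =
      d 0 * (tridiagonal (fun j ↦ d (j + 1)) (fun j ↦ u (j + 1)) (fun j ↦ l (j + 1)) (m + 1)).det -
      u 0 * l 0 *
        (tridiagonal (fun j ↦ d (j + 2)) (fun j ↦ u (j + 2)) (fun j ↦ l (j + 2)) m).det := by
  have first_row_zero (j : Fin m) : tridiagonal d u l (m + 2) 0 j.succ.succ = 0 := by
    simp [tridiagonal]
  have diag_entry : tridiagonal d u l (m + 2) 0 0 = d 0 := by simp [tridiagonal]
  have super_entry : tridiagonal d u l (m + 2) 0 1 = u 0 := by simp [tridiagonal]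
  rw [Matrix.det_succ_row_zero, Fin.sum_univ_succ, Fin.sum_univ_succ, Fin.succAbove_zero,
    submatrix_succ_tridiagonal, Fin.succ_zero_eq_one, det_tridiagonal_submatrix_succAbove_one,
    diag_entry, super_entry]
  simp only [first_row_zero, Fin.val_zero, Fin.val_one, pow_zero, pow_one, mul_zero, zero_mul,
    Finset.sum_const_zero]
  ring

theorem det_tridiagonal (d u l : ℕ → R) (m : ℕ) :
    (tridiagonal d u l m).det = continuant d (fun j ↦ u j * l j) m := by
  induction m using Nat.twoStepInduction generalizing d u l with
  | zero => simp [continuant]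
  | one => simp [continuant, tridiagonal]
  | more m ih ih' => rw [det_tridiagonal_add_two, ih, ih', continuant_add_two_expand_first]

end Tridiagonal

section CentrosymmetricJacobi

theorem prod_range_mul_reflect_eq_sq {M : Type*} [CommMonoid M] (a : ℕ → M) (n : ℕ) :
    ∏ j ∈ Finset.range n, a (j + 1) * a (n - j) = (∏ i ∈ Finset.Icc 1 n, a i) ^ 2 := by
  have prod_shift : ∏ j ∈ Finset.range n, a (j + 1) = ∏ i ∈ Finset.Icc 1 n, a i := by
    rw [Finset.range_eq_Ico, Finset.prod_Ico_add' a 0 n 1]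
    rfl
  have prod_reflect : ∏ j ∈ Finset.range n, a (n - j) = ∏ j ∈ Finset.range n, a (j + 1) := by
    rw [← Finset.prod_range_reflect (fun j ↦ a (j + 1)) n]
    refine Finset.prod_congr rfl fun j hj ↦ congrArg a ?_
    have := Finset.mem_range.mp hj
    omega
  rw [Finset.prod_mul_distrib, prod_reflect, prod_shift, sq]

variable {R : Type*} [CommRing R]

theorem eval_eq_continuant_of_recurrence {n : ℕ} {a b : ℕ → R} {P : ℕ → R[X]}
    (hP0 : P 0 = 1) (hP1 : P 1 = X - C (b 0))
    (hP : ∀ k, 2 ≤ k → k ≤ n + 1 →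
      P k = (X - C (b (k - 1))) * P (k - 1) - C (a (k - 1) * a (n + 2 - k)) * P (k - 2))
    (z : R) {k : ℕ} (hk : k ≤ n + 1) :
    (P k).eval z = continuant (fun j ↦ z - b j) (fun j ↦ a (j + 1) * a (n - j)) k := by
  refine eq_continuant_of_recurrence (p := fun k ↦ (P k).eval z) (by simp [hP0]) (by simp [hP1])
    (fun k hk ↦ ?_) hk
  simp [hP (k + 2) (by omega) hk]

theorem statement_5_general {n : ℕ} (hn : n ≠ 0) {a b : ℕ → R} (hb : ∀ j, j ≤ n → b j = b (n - j))
    {P : ℕ → R[X]} (hP0 : P 0 = 1) (hP1 : P 1 = X - C (b 0))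
    (hP : ∀ k, 2 ≤ k → k ≤ n + 1 →
      P k = (X - C (b (k - 1))) * P (k - 1) - C (a (k - 1) * a (n + 2 - k)) * P (k - 2))
    (z : R) :
    (P n).eval z ^ 2 - (∏ i ∈ Finset.Icc 1 n, a i) ^ 2 =
      (z • 1 - tridiagonal b (fun j ↦ a (j + 1)) (fun j ↦ a (n - j)) (n + 1)).det *
      (z • 1 - tridiagonal (fun j ↦ b (j + 1)) (fun j ↦ a (j + 2)) (fun j ↦ a (n - (j + 1)))
        (n - 1)).det := by
  obtain ⟨m, rfl⟩ := Nat.exists_eq_add_one_of_ne_zero hn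
  set d : ℕ → R := fun j ↦ z - b j
  set c : ℕ → R := fun j ↦ a (j + 1) * a (m + 1 - j)
  have centrosymmetry : continuant d c (m + 1) =
      continuant (fun j ↦ d (j + 1)) (fun j ↦ c (j + 1)) (m + 1) := by
    refine continuant_eq_of_reverse (fun i j h ↦ ?_) (fun i j h ↦ ?_)
    · simp only [d, hb i (by omega), show m + 1 - i = j + 1 by omega]
    · simp only [c, show m + 1 - i = j + 1 + 1 by omega, show m + 1 - (j + 1) = i + 1 by omega,
        mul_comm]
  have euler := continuant_mul_continuant_shift_sub d c m
  rw [← centrosymmetry, prod_range_mul_reflect_eq_sq] at euler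
  simp only [smul_one_sub_tridiagonal, det_tridiagonal, neg_mul_neg]
  rw [eval_eq_continuant_of_recurrence hP0 hP1 hP z (by omega), ← euler,
    Nat.add_sub_cancel]
  ring

end CentrosymmetricJacobi

theorem Jcs_eq_tridiagonal (n : ℕ) (a b : ℕ → ℝ) :
    Jcs n a b = tridiagonal b (fun j ↦ a (j + 1)) (fun j ↦ a (n - j)) (n + 1) :=
  rfl

theorem JDcs_eq_tridiagonal (n : ℕ) (a b : ℕ → ℝ) :
    JDcs n a b = tridiagonal (fun j ↦ b (j + 1)) (fun j ↦ a (j + 2)) (fun j ↦ a (n - (j + 1)))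
      (n - 1) := by
  ext i j
  simp [JDcs, Jcs, tridiagonal]

/-- `P_{n0}(z)² − (∏ a(i))² = det(z·I − J_cs) · det(z·I − J^D_cs)`. -/
theorem statement_5 (n0 : ℕ) (hn0 : 2 ≤ n0) (a b : ℕ → ℝ)
    (ha : ∀ i, 1 ≤ i → i ≤ n0 → a i ≠ 0)
    (hb : ∀ j, j ≤ n0 → b j = b (n0 - j))
    (P : ℕ → Polynomial ℝ)
    (hP0 : P 0 = 1) (hP1 : P 1 = X - C (b 0))
    (hP : ∀ k, 2 ≤ k → k ≤ n0 + 1 →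
      P k = (X - C (b (k - 1))) * P (k - 1) - C (a (k - 1) * a (n0 + 2 - k)) * P (k - 2))
    (PD : ℕ → Polynomial ℝ)
    (hPD0 : PD 0 = 1) (hPD1 : PD 1 = X - C (b 1))
    (hPD : ∀ k, 2 ≤ k → k ≤ n0 - 1 →
      PD k = (X - C (b k)) * PD (k - 1) - C (a k * a (n0 + 1 - k)) * PD (k - 2)) :
    ∀ z : ℝ,
      (P n0).eval z ^ 2 - (∏ i ∈ Finset.Icc 1 n0, a i) ^ 2 =
        (z • (1 : Matrix (Fin (n0 + 1)) (Fin (n0 + 1)) ℝ) - Jcs n0 a b).det *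
        (z • (1 : Matrix (Fin (n0 - 1)) (Fin (n0 - 1)) ℝ) - JDcs n0 a b).det := by
  intro z
  rw [Jcs_eq_tridiagonal, JDcs_eq_tridiagonal]
  exact statement_5_general (by omega) hb hP0 hP1 hP z
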